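/- Let A, A', A'' be oriented finitely generated abelian groups of rank 1. Let ψ : D → A' (with D ⊆ A) be a relative partial dilatation from A to A' and ψ' : D' → A'' (with D' ⊆ A') a relative partial dilatation from A' to A''. Then the composite partial map χ defined on { x ∈ D : ψ(x) ∈ D' } by χ(x) = ψ'(ψ(x)) is a relative partial dilatation from A to A'', and its oriented dilatation rate satisfies λ(χ) = λ(ψ)·λ(ψ'); that is, the oriented dilatation rate is multiplicative under composition of partial dilatations. -/

import Mathlib

/-!
In a group of rank one any two elements of infinite order have a common nonzero multiple. Scaling
the defining pairs `(v, v')` of `ψ` and `(w', w'')` of `ψ'` so that `p • v' = q • w'` gives the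
defining pair `(p • v, q • w'')` of the composite. Rates do not change under scaling, so the
product of the two rates telescopes.
-/

section InfiniteOrder

variable {G : Type*} [SubtractionMonoid G]

theorem not_isOfFinAddOrder_iff_zsmul_eq_zero_imp {x : G} :
    ¬IsOfFinAddOrder x ↔ ∀ n : ℤ, n • x = 0 → n = 0 := by
  simp only [isOfFinAddOrder_iff_zsmul_eq_zero, not_exists, not_and', not_not, ne_eq]

theorem not_isOfFinAddOrder_zsmul {n : ℤ} (hn : n ≠ 0) {x : G} (hx : ¬IsOfFinAddOrder x) :
    ¬IsOfFinAddOrder (n • x) := by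
  rw [not_isOfFinAddOrder_iff_zsmul_eq_zero_imp] at hx ⊢
  intro m hm
  rw [← mul_zsmul'] at hm
  exact (mul_eq_zero.1 (hx _ hm)).resolve_left hn

end InfiniteOrder

section RankOne

variable {A : Type*} [AddCommGroup A]

theorem map_ne_zero_of_not_isOfFinAddOrder {u : A →+ ℚ} (hu : u.ker ≤ AddCommGroup.torsion A)
    {x : A} (hx : ¬IsOfFinAddOrder x) : u x ≠ 0 :=
  fun h ↦ hx (hu h)

theorem exists_zsmul_eq_zsmul_of_ker_le_torsion {u : A →+ ℚ}
    (hu : u.ker ≤ AddCommGroup.torsion A) {x y : A}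
    (hx : ¬IsOfFinAddOrder x) (hy : ¬IsOfFinAddOrder y) :
    ∃ p q : ℤ, p ≠ 0 ∧ q ≠ 0 ∧ p • x = q • y := by
  have hux : u x ≠ 0 := map_ne_zero_of_not_isOfFinAddOrder hu hx
  have huy : u y ≠ 0 := map_ne_zero_of_not_isOfFinAddOrder hu hy
  set t : ℚ := u x / u y
  have ht : (t.den : ℤ) • x - t.num • y ∈ u.ker := by
    have hden : (t.den : ℚ) * t = t.num := Rat.den_mul_eq_num t
    rw [AddMonoidHom.mem_ker, map_sub, map_zsmul, map_zsmul, zsmul_eq_mul, zsmul_eq_mul,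
      Int.cast_natCast, ← hden, mul_assoc, div_mul_cancel₀ _ huy, sub_self]
  obtain ⟨n, hn, hnt⟩ := isOfFinAddOrder_iff_zsmul_eq_zero.1 (hu ht)
  refine ⟨n * t.den, n * t.num, mul_ne_zero hn (Int.natCast_ne_zero.2 t.den_nz),
    mul_ne_zero hn (Rat.num_ne_zero.2 (div_ne_zero hux huy)), ?_⟩
  rwa [smul_sub, sub_eq_zero, smul_smul, smul_smul] at hnt

/-- The orientation `u` of `A`, as a homomorphism on `A` itself. Its values are taken in `ℚ`, the
field in which dilatation rates live. -/
def rationalOrientation (u : (A ⧸ AddCommGroup.torsion A) ≃+ ℤ) : A →+ ℚ :=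
  (Int.castAddHom ℚ).comp (u.toAddMonoidHom.comp (QuotientAddGroup.mk' (AddCommGroup.torsion A)))

theorem ker_rationalOrientation_le_torsion (u : (A ⧸ AddCommGroup.torsion A) ≃+ ℤ) :
    (rationalOrientation u).ker ≤ AddCommGroup.torsion A := fun x hx ↦ by
  have hux : u (QuotientAddGroup.mk x : A ⧸ AddCommGroup.torsion A) = 0 := Int.cast_eq_zero.1 hx
  exact (QuotientAddGroup.eq_zero_iff x).1 (u.map_eq_zero_iff.1 hux)

end RankOne

section PartialDilatation

variable {A A' A'' : Type*} [AddCommGroup A] [AddCommGroup A'] [AddCommGroup A'']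

/-- The ratio `u' v' / u v`, which for a defining pair `(v, v')` of a relative partial dilatation
is its oriented dilatation rate. Orientations enter as homomorphisms to `ℚ`, so that groups of rank
one that are not finitely generated are covered. -/
def orientedDilatationRate (u : A →+ ℚ) (u' : A' →+ ℚ) (v : A) (v' : A') : ℚ :=
  u' v' / u v

theorem orientedDilatationRate_zsmul (u : A →+ ℚ) (u' : A' →+ ℚ) (v : A) (v' : A') {n : ℤ}
    (hn : n ≠ 0) :
    orientedDilatationRate u u' (n • v) (n • v') = orientedDilatationRate u u' v v' := by
  simp only [orientedDilatationRate, map_zsmul, zsmul_eq_mul]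
  exact mul_div_mul_left _ _ (Int.cast_ne_zero.2 hn)

theorem orientedDilatationRate_mul (u : A →+ ℚ) {u' : A' →+ ℚ} (u'' : A'' →+ ℚ) (v : A) {v' : A'}
    (v'' : A'') (hv' : u' v' ≠ 0) :
    orientedDilatationRate u u' v v' * orientedDilatationRate u' u'' v' v'' =
      orientedDilatationRate u u'' v v'' :=
  div_mul_div_cancel₀' hv' _ _

/-- `(v, v')` is a defining pair of the partial map `f`, which is then a relative partial
dilatation. Membership `m • v' ∈ f (m • v)` says both that `f` is defined at `m • v` and that its
value there is `m • v'`. -/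
structure IsDefiningPair (f : A →. A') (v : A) (v' : A') : Prop where
  not_isOfFinAddOrder_left : ¬IsOfFinAddOrder v
  not_isOfFinAddOrder_right : ¬IsOfFinAddOrder v'
  zsmul_mem : ∀ m : ℤ, m • v' ∈ f (m • v)

namespace IsDefiningPair

variable {f : A →. A'} {g : A' →. A''}

theorem zsmul {v : A} {v' : A'} (h : IsDefiningPair f v v') {n : ℤ} (hn : n ≠ 0) :
    IsDefiningPair f (n • v) (n • v') where
  not_isOfFinAddOrder_left := not_isOfFinAddOrder_zsmul hn h.not_isOfFinAddOrder_left
  not_isOfFinAddOrder_right := not_isOfFinAddOrder_zsmul hn h.not_isOfFinAddOrder_right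
  zsmul_mem m := by simpa only [smul_smul] using h.zsmul_mem (m * n)

theorem comp {v : A} {v' : A'} {v'' : A''} (hg : IsDefiningPair g v' v'')
    (hf : IsDefiningPair f v v') : IsDefiningPair (g.comp f) v v'' where
  not_isOfFinAddOrder_left := hf.not_isOfFinAddOrder_left
  not_isOfFinAddOrder_right := hg.not_isOfFinAddOrder_right
  zsmul_mem m := Part.mem_bind (hf.zsmul_mem m) (hg.zsmul_mem m)

theorem orientedDilatationRate_eq {u : A →+ ℚ} (hu : u.ker ≤ AddCommGroup.torsion A)
    (u' : A' →+ ℚ) {v w : A} {v' w' : A'} (hv : IsDefiningPair f v v')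
    (hw : IsDefiningPair f w w') :
    orientedDilatationRate u u' v v' = orientedDilatationRate u u' w w' := by
  obtain ⟨p, q, hp, hq, hpq⟩ := exists_zsmul_eq_zsmul_of_ker_le_torsion hu
    hv.not_isOfFinAddOrder_left hw.not_isOfFinAddOrder_left
  have hpq' : p • v' = q • w' := Part.mem_unique (hv.zsmul_mem p) (hpq ▸ hw.zsmul_mem q)
  rw [← orientedDilatationRate_zsmul u u' v v' hp, hpq, hpq',
    orientedDilatationRate_zsmul _ _ _ _ hq]

end IsDefiningPair

theorem isDefiningPair_equivSubtype_symm {D : Set A} {ψ : D → A'} {v : A} {v' : A'}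
    (hv : ∀ n : ℤ, n • v = 0 → n = 0) (hv' : ∀ n : ℤ, n • v' = 0 → n = 0)
    (hD : ∀ m : ℤ, m • v ∈ D) (hψ : ∀ m : ℤ, ψ ⟨m • v, hD m⟩ = m • v') :
    IsDefiningPair (PFun.equivSubtype.symm ⟨(· ∈ D), ψ⟩) v v' where
  not_isOfFinAddOrder_left := not_isOfFinAddOrder_iff_zsmul_eq_zero_imp.2 hv
  not_isOfFinAddOrder_right := not_isOfFinAddOrder_iff_zsmul_eq_zero_imp.2 hv'
  zsmul_mem m := ⟨hD m, hψ m⟩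

theorem orientedDilatationRate_comp_general {u : A →+ ℚ} {u' : A' →+ ℚ} (u'' : A'' →+ ℚ)
    (hu : u.ker ≤ AddCommGroup.torsion A) (hu' : u'.ker ≤ AddCommGroup.torsion A')
    {f : A →. A'} {g : A' →. A''} {v : A} {v' w' : A'} {w'' : A''}
    (hf : IsDefiningPair f v v') (hg : IsDefiningPair g w' w'') :
    (∃ z z'', IsDefiningPair (g.comp f) z z'') ∧
      ∀ z z'', IsDefiningPair (g.comp f) z z'' →
        orientedDilatationRate u u'' z z'' =
          orientedDilatationRate u u' v v' * orientedDilatationRate u' u'' w' w'' := by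
  obtain ⟨p, q, hp, hq, hpq⟩ := exists_zsmul_eq_zsmul_of_ker_le_torsion hu'
    hf.not_isOfFinAddOrder_right hg.not_isOfFinAddOrder_left
  have hfp : IsDefiningPair f (p • v) (q • w') := hpq ▸ hf.zsmul hp
  have hgq : IsDefiningPair g (q • w') (q • w'') := hg.zsmul hq
  refine ⟨⟨p • v, q • w'', hgq.comp hfp⟩, fun z z'' hz ↦ ?_⟩
  have huw' : u' (q • w') ≠ 0 :=
    map_ne_zero_of_not_isOfFinAddOrder hu' hgq.not_isOfFinAddOrder_left
  calc orientedDilatationRate u u'' z z''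
      = orientedDilatationRate u u'' (p • v) (q • w'') :=
        hz.orientedDilatationRate_eq hu u'' (hgq.comp hfp)
    _ = orientedDilatationRate u u' (p • v) (q • w') *
          orientedDilatationRate u' u'' (q • w') (q • w'') :=
        (orientedDilatationRate_mul u u'' _ _ huw').symm
    _ = orientedDilatationRate u u' v v' * orientedDilatationRate u' u'' w' w'' := by
        rw [hfp.orientedDilatationRate_eq hu u' hf, orientedDilatationRate_zsmul _ _ _ _ hq]

end PartialDilatation

/-- The oriented dilatation rate is multiplicative under composition of
relative partial dilatations between oriented finitely generated rank-1 abelian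
groups: the composite partial map `χ = ψ' ∘ ψ` is a relative partial dilatation
from `A` to `A''` with some defining pair `(z, z'')`, and
`λ(χ) = λ(ψ)·λ(ψ')`. -/
theorem orientedDilatationRate_comp
    {A A' A'' : Type*} [AddCommGroup A] [AddCommGroup A'] [AddCommGroup A'']
    [AddGroup.FG A] [AddGroup.FG A'] [AddGroup.FG A'']
    (uA : (A ⧸ AddCommGroup.torsion A) ≃+ ℤ)
    (uA' : (A' ⧸ AddCommGroup.torsion A') ≃+ ℤ)
    (uA'' : (A'' ⧸ AddCommGroup.torsion A'') ≃+ ℤ)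
    (D : Set A) (ψ : D → A')
    (D' : Set A') (ψ' : D' → A'')
    (v : A) (v' : A')
    (hv : ∀ n : ℤ, n • v = 0 → n = 0)
    (hv' : ∀ n : ℤ, n • v' = 0 → n = 0)
    (hDv : ∀ m : ℤ, m • v ∈ D)
    (hψv : ∀ m : ℤ, ψ ⟨m • v, hDv m⟩ = m • v')
    (w' : A') (w'' : A'')
    (hw' : ∀ n : ℤ, n • w' = 0 → n = 0)
    (hw'' : ∀ n : ℤ, n • w'' = 0 → n = 0)
    (hD'w : ∀ m : ℤ, m • w' ∈ D')
    (hψ'w : ∀ m : ℤ, ψ' ⟨m • w', hD'w m⟩ = m • w'') :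
    ∃ (z : A) (z'' : A''),
      (∀ n : ℤ, n • z = 0 → n = 0) ∧
      (∀ n : ℤ, n • z'' = 0 → n = 0) ∧
      (∀ k : ℤ, ∃ (h₁ : k • z ∈ D) (h₂ : ψ ⟨k • z, h₁⟩ ∈ D'),
          ψ' ⟨ψ ⟨k • z, h₁⟩, h₂⟩ = k • z'') ∧
      (uA'' ((QuotientAddGroup.mk z'' : A'' ⧸ AddCommGroup.torsion A'')) : ℚ) /
          (uA ((QuotientAddGroup.mk z : A ⧸ AddCommGroup.torsion A)) : ℚ) =
        ((uA' ((QuotientAddGroup.mk v' : A' ⧸ AddCommGroup.torsion A')) : ℚ) /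
            (uA ((QuotientAddGroup.mk v : A ⧸ AddCommGroup.torsion A)) : ℚ)) *
          ((uA'' ((QuotientAddGroup.mk w'' : A'' ⧸ AddCommGroup.torsion A'')) : ℚ) /
            (uA' ((QuotientAddGroup.mk w' : A' ⧸ AddCommGroup.torsion A')) : ℚ)) := by
  obtain ⟨⟨z, z'', hz⟩, hrate⟩ := orientedDilatationRate_comp_general (rationalOrientation uA'')
    (ker_rationalOrientation_le_torsion uA) (ker_rationalOrientation_le_torsion uA')
    (isDefiningPair_equivSubtype_symm hv hv' hDv hψv)
    (isDefiningPair_equivSubtype_symm hw' hw'' hD'w hψ'w)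
  refine ⟨z, z'', not_isOfFinAddOrder_iff_zsmul_eq_zero_imp.1 hz.not_isOfFinAddOrder_left,
    not_isOfFinAddOrder_iff_zsmul_eq_zero_imp.1 hz.not_isOfFinAddOrder_right, fun k ↦ ?_,
    hrate z z'' hz⟩
  obtain ⟨⟨h₁, h₂⟩, h⟩ := hz.zsmul_mem k
  exact ⟨h₁, h₂, h⟩
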